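/- Let q = p^e and 0 ≤ κ < e. Let C be a Λ-MT code over F_q with index ℓ, block lengths (m_1,…,m_ℓ), and GPM G, and suppose σ^{e−κ}(Λ^{−1}) = Λ. Assume each m_i is coprime to q and each entry in the j-th column of G has degree at most m_j. Let N = lcm(t_1 m_1,…,t_ℓ m_ℓ) and factor x^N − 1 = p_1(x)⋯p_s(x) into distinct irreducible polynomials over F_q. For each j, let r_j be the rank over F_q[x]/⟨p_j(x)⟩ of σ^{e−κ}(G(1/x)·diag(x^{m_i}))·diag((x^N−1)/(x^{m_i}−λ_i))·G^T reduced modulo p_j(x). Then C is κ-Galois LCD (i.e., C ∩ C^{⊥κ} = {0}) if and only if Σ_{j=1}^s r_j·deg(p_j(x)) = dim(C). -/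

import Mathlib

/-!
Write `h_b = (x^N - 1)/(x^{m_b} - λ_b)`, `H = diag(h_b)`, and let `S` be the matrix with rows
`σ^{e-κ}(x^{m_b} g_{ab}(1/x))`, so that the matrix of the theorem is `M = S H Gᵀ`.

The map `Θ : u ↦ u G` sends `F[x]^ℓ` onto the code. Since `x^N - 1` is separable, the Chinese
remainder theorem identifies `∑ r_j deg p_j` with the `F`-dimension of the image of `u ↦ M u`
modulo `x^N - 1`. The point is that, for `c = u G`,

  `M u = S H c ≡ 0 mod x^N - 1` if and only if `c` lies in the `κ`-Galois dual (`mem_dual_iff`).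

Hence `u ↦ M u` factors through `Θ`, and its image has dimension `dim C` exactly when the induced
map on `C` is injective, i.e. when `C` meets its dual trivially (`ker_le_iff_finrank_eq`,
`sum_rank_eq_iff`).

For `mem_dual_iff`, apply `σ^{e-κ}` to the Galois form: as `σ^{e-κ}(λ_b) = λ_b⁻¹`, it becomes a sum
of Euclidean pairings between `F[x]/(x^m - λ⁻¹)` and `F[x]/(x^m - λ)` (`blockPair`). This pairing is
invariant under simultaneous multiplication by `x`, so it equals the constant coefficient of
`x^m g(1/x) h c` in `F[x]/(x^N - 1)` (`blockPair_eq_coeff`). Letting `g` run over all shifts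
`x^k g_a` of the rows of `G` recovers every coefficient of the components of `S H c`
(`dvd_iff_coeff_zero`).
-/

open Polynomial Matrix

/-- constacyclic shift with constant `lam` on one block of length `m`:
`(a₀, …, a_{m-1}) ↦ (lam * a_{m-1}, a₀, …, a_{m-2})`. -/
def blockShift {F : Type*} [Field F] (lam : F) {m : ℕ} (a : Fin m → F) : Fin m → F :=
  fun j => if j.val = 0 then lam * a ⟨m - 1, by have := j.isLt; omega⟩
           else a ⟨j.val - 1, by have := j.isLt; omega⟩

/-- `CC ⊆ ⊕ᵢ F^{m i}` is a Λ-multi-twisted code: it is invariant under the blockwise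
constacyclic shift `T_Λ`. -/
def IsMT {F : Type*} [Field F] {ℓ : ℕ} (lam : Fin ℓ → F) {m : Fin ℓ → ℕ}
    (CC : Submodule F (∀ i, Fin (m i) → F)) : Prop :=
  ∀ v ∈ CC, (fun i => blockShift (lam i) (v i)) ∈ CC

/-- from a polynomial vector in `(F[x])^ℓ` to a blocked vector: reduce component `i`
modulo `x^{m i} - λᵢ` and take the coefficients. -/
noncomputable def toCode {F : Type*} [Field F] {ℓ : ℕ} (lam : Fin ℓ → F) (m : Fin ℓ → ℕ)
    (q : Fin ℓ → Polynomial F) : ∀ i, Fin (m i) → F :=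
  fun i j => ((q i) %ₘ (X ^ (m i) - Polynomial.C (lam i))).coeff j

/-- `G` is a generator polynomial matrix (GPM) of the Λ-MT code `CC`: its rows form a
minimal generating set (equivalently, since the corresponding submodule of `(F[x])^ℓ` has
rank `ℓ`, a linearly independent generating set) of the `F[x]`-submodule of `(F[x])^ℓ`
corresponding to `CC`, namely `{q | toCode lam m q ∈ CC}`. -/
def IsGPM {F : Type*} [Field F] {ℓ : ℕ} (lam : Fin ℓ → F) (m : Fin ℓ → ℕ)
    (CC : Submodule F (∀ i, Fin (m i) → F))
    (G : Matrix (Fin ℓ) (Fin ℓ) (Polynomial F)) : Prop :=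
  LinearIndependent (Polynomial F) (fun i => G i) ∧
  (Submodule.span (Polynomial F) (Set.range (fun i => G i)) :
      Set (Fin ℓ → Polynomial F)) = {q | toCode lam m q ∈ CC}

/-- κ-Galois dual of a blocked code over a field of characteristic `p`:
`{v | ∀ c ∈ C, ∑ᵢⱼ c i j * (v i j)^(p^κ) = 0}`. -/
def galoisDualMT (p κ : ℕ) [Fact p.Prime] {F : Type*} [Field F] [CharP F p] {ℓ : ℕ}
    {m : Fin ℓ → ℕ} (CC : Submodule F (∀ i, Fin (m i) → F)) :
    Submodule F (∀ i, Fin (m i) → F) where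
  carrier := {v | ∀ c ∈ CC, ∑ i, ∑ j, c i j * (v i j) ^ p ^ κ = 0}
  zero_mem' := by
    intro c hc
    have hp : p ^ κ ≠ 0 := pow_ne_zero κ (Nat.Prime.ne_zero Fact.out)
    simp [zero_pow hp]
  add_mem' := by
    intro a b ha hb c hc
    haveI : ExpChar F p := ExpChar.prime Fact.out
    simp only [Set.mem_setOf_eq] at *
    have h1 : ∀ i j, ((a + b) i j) ^ p ^ κ = (a i j) ^ p ^ κ + (b i j) ^ p ^ κ := by
      intro i j; simp only [Pi.add_apply]; exact add_pow_expChar_pow (a i j) (b i j) p κ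
    simp only [h1, mul_add, Finset.sum_add_distrib, ha c hc, hb c hc, add_zero]
  smul_mem' := by
    intro r v hv c hc
    simp only [Set.mem_setOf_eq] at *
    have h1 : ∀ i, ∑ j, c i j * ((r • v) i j) ^ p ^ κ
        = r ^ p ^ κ * ∑ j, c i j * (v i j) ^ p ^ κ := by
      intro i
      rw [Finset.mul_sum]
      exact Finset.sum_congr rfl
        (fun j _ => by simp only [Pi.smul_apply, smul_eq_mul, mul_pow]; ring)
    simp only [h1, ← Finset.mul_sum, hv c hc, mul_zero]

/-- the `p^t`-power map `a ↦ a^(p^t)` (iterated Frobenius) as a ring homomorphism. -/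
def powFrob (F : Type*) [Field F] (p t : ℕ) [Fact p.Prime] [CharP F p] : F →+* F where
  toFun a := a ^ p ^ t
  map_one' := one_pow _
  map_mul' a b := mul_pow a b _
  map_zero' := zero_pow (pow_ne_zero t (Nat.Prime.ne_zero Fact.out))
  map_add' a b := by
    haveI : ExpChar F p := ExpChar.prime Fact.out
    exact add_pow_expChar_pow a b p t

/-! ### The pairing on one constacyclic block -/

/-- The Euclidean pairing of the coefficient vectors of `g mod (x^m - μ)` and
`c mod (x^m - lam)`; it is used with `μ = lam⁻¹`. -/
noncomputable def blockPair {F : Type*} [Field F] (m : ℕ) (μ lam : F) (g c : F[X]) : F :=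
  ∑ j : Fin m, (g %ₘ (X ^ m - Polynomial.C μ)).coeff j * (c %ₘ (X ^ m - Polynomial.C lam)).coeff j

section Block

variable {F : Type*} [Field F]

lemma coeff_modByMonic_of_le {m : ℕ} (hm : 0 < m) (a : F) (f : F[X]) {k : ℕ} (hk : m ≤ k) :
    (f %ₘ (X ^ m - Polynomial.C a)).coeff k = 0 := by
  have h := degree_modByMonic_lt f (monic_X_pow_sub_C a hm.ne')
  rw [degree_X_pow_sub_C hm] at h
  exact coeff_eq_zero_of_degree_lt (h.trans_le (by exact_mod_cast hk))

lemma X_mul_modByMonic {m : ℕ} (hm : 0 < m) (a : F) (f : F[X]) :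
    (X * f) %ₘ (X ^ m - Polynomial.C a) =
      X * (f %ₘ (X ^ m - Polynomial.C a)) -
        Polynomial.C ((f %ₘ (X ^ m - Polynomial.C a)).coeff (m - 1)) *
          (X ^ m - Polynomial.C a) := by
  have hmon := monic_X_pow_sub_C a hm.ne'
  set r := f %ₘ (X ^ m - Polynomial.C a) with hr
  have h1 : (X * f) %ₘ (X ^ m - Polynomial.C a) =
      (X * r - Polynomial.C (r.coeff (m - 1)) * (X ^ m - Polynomial.C a)) %ₘ
        (X ^ m - Polynomial.C a) := by
    apply modByMonic_eq_of_dvd_sub hmon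
    refine ⟨X * (f /ₘ (X ^ m - Polynomial.C a)) + Polynomial.C (r.coeff (m - 1)), ?_⟩
    have := modByMonic_add_div f (X ^ m - Polynomial.C a)
    rw [← hr] at this
    linear_combination (-X) * this
  rw [h1, modByMonic_eq_self_iff hmon, degree_X_pow_sub_C hm, degree_lt_iff_coeff_zero]
  intro k hk
  obtain ⟨k, rfl⟩ : ∃ k', k = k' + 1 := ⟨k - 1, by omega⟩
  simp only [coeff_sub, coeff_X_mul, coeff_C_mul, coeff_X_pow, coeff_C_succ, sub_zero]
  rcases eq_or_ne (k + 1) m with h | h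
  · subst h; simp
  · rw [if_neg h, hr, coeff_modByMonic_of_le hm a f (by omega : m ≤ k)]; simp

/-- Multiplication by `x` is the constacyclic shift, and the shifts with constants `μ` and
`lam` are mutually adjoint inverses when `μ * lam = 1`. -/
lemma blockPair_X_mul {m : ℕ} (hm : 0 < m) {μ lam : F} (h : μ * lam = 1) (g c : F[X]) :
    blockPair m μ lam (X * g) (X * c) = blockPair m μ lam g c := by
  unfold blockPair
  obtain ⟨m, rfl⟩ : ∃ m', m = m' + 1 := ⟨m - 1, by omega⟩
  rw [X_mul_modByMonic hm, X_mul_modByMonic hm, Fin.sum_univ_succ, Fin.sum_univ_castSucc]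
  rw [add_comm]
  congr 1
  · refine Finset.sum_congr rfl fun j _ => ?_
    have := j.isLt
    simp [coeff_X_pow, this.ne]
  · simp [coeff_X_pow, coeff_C]
    generalize (g %ₘ _).coeff m = a
    generalize (c %ₘ _).coeff m = b
    linear_combination (a * b) * h

lemma blockPair_X_pow_mul {m : ℕ} (hm : 0 < m) {μ lam : F} (h : μ * lam = 1) (g c : F[X])
    (k : ℕ) : blockPair m μ lam (X ^ k * g) (X ^ k * c) = blockPair m μ lam g c := by
  induction k with
  | zero => simp
  | succ k ih => rw [pow_succ', mul_assoc, mul_assoc, blockPair_X_mul hm h, ih]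

lemma blockPair_X_pow_left {m k : ℕ} (hk : k < m) (μ lam : F) (c : F[X]) :
    blockPair m μ lam (X ^ k) c = (c %ₘ (X ^ m - Polynomial.C lam)).coeff k := by
  have hm : 0 < m := by omega
  have h1 : (X ^ k : F[X]) %ₘ (X ^ m - Polynomial.C μ) = X ^ k := by
    rw [modByMonic_eq_self_iff (monic_X_pow_sub_C μ hm.ne'), degree_X_pow_sub_C hm, degree_X_pow]
    exact_mod_cast hk
  unfold blockPair
  rw [h1, Finset.sum_eq_single ⟨k, hk⟩]
  · simp
  · intro b _ hb
    have : (b : ℕ) ≠ k := fun h => hb (Fin.ext h)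
    simp [coeff_X_pow, this]
  · simp

lemma blockPair_add_left {m : ℕ} (μ lam : F) (g g' c : F[X]) :
    blockPair m μ lam (g + g') c = blockPair m μ lam g c + blockPair m μ lam g' c := by
  simp [blockPair, add_modByMonic, add_mul, Finset.sum_add_distrib]

lemma blockPair_C_mul_left {m : ℕ} (μ lam a : F) (g c : F[X]) :
    blockPair m μ lam (Polynomial.C a * g) c = a * blockPair m μ lam g c := by
  simp [blockPair, ← smul_eq_C_mul, smul_modByMonic, Finset.mul_sum, mul_assoc]

/-- Multiplying by the cofactor `h = (x^N - 1)/(x^m - lam)` embeds `F[x]/(x^m - lam)` in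
`F[x]/(x^N - 1)`; up to `x^m` this respects the constant coefficient, because
`x^m h ≡ lam h` and `lam h(0) = 1`. -/
lemma coeff_zero_embed {m N : ℕ} (hm : 0 < m) (hN : 0 < N) {lam : F} {h : F[X]}
    (hh : (X ^ m - Polynomial.C lam) * h = X ^ N - Polynomial.C 1) (c : F[X]) :
    ((X ^ m * h * c) %ₘ (X ^ N - Polynomial.C 1)).coeff 0 =
      (c %ₘ (X ^ m - Polynomial.C lam)).coeff 0 := by
  have hmon := monic_X_pow_sub_C lam hm.ne'
  have hmonN := monic_X_pow_sub_C (1 : F) hN.ne'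
  set r := c %ₘ (X ^ m - Polynomial.C lam) with hr
  have hc := modByMonic_add_div c (X ^ m - Polynomial.C lam)
  rw [← hr] at hc
  have h0 : h ≠ 0 := by
    rintro rfl
    rw [mul_zero] at hh
    exact hmonN.ne_zero hh.symm
  have hd : (m : WithBot ℕ) + h.degree = N := by
    rw [← degree_X_pow_sub_C hm lam, ← degree_X_pow_sub_C hN (1 : F), ← hh, degree_mul]
  have h1 : (X ^ m * h * c) %ₘ (X ^ N - Polynomial.C 1) =
      (Polynomial.C lam * h * r) %ₘ (X ^ N - Polynomial.C 1) := by
    apply modByMonic_eq_of_dvd_sub hmonN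
    refine ⟨X ^ m * (c /ₘ (X ^ m - Polynomial.C lam)) + r, ?_⟩
    rw [← hh]
    linear_combination (- X ^ m * h) * hc
  have h2 : (Polynomial.C lam * h * r).degree < N := by
    by_cases hr0 : r = 0
    · rw [hr0, mul_zero, degree_zero]; exact WithBot.bot_lt_coe _
    have hrd : r.degree < m := by
      have := degree_modByMonic_lt c hmon
      rwa [degree_X_pow_sub_C hm, ← hr] at this
    rw [← hd, mul_assoc]
    calc _ ≤ (h * r).degree := by
            rw [← smul_eq_C_mul]; exact degree_smul_le _ _
      _ = r.degree + h.degree := by rw [degree_mul, add_comm]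
      _ < _ := by
        rw [degree_eq_natDegree hr0] at hrd ⊢
        rw [degree_eq_natDegree h0]
        norm_cast at hrd ⊢
        omega
  rw [h1, (modByMonic_eq_self_iff hmonN).2 (by rwa [degree_X_pow_sub_C hN])]
  have h3 := congrArg (fun f => coeff f 0) hh
  simp [mul_coeff_zero, coeff_X_pow, hm.ne, hN.ne] at h3
  simp [mul_coeff_zero, h3]

lemma X_pow_mul_modByMonic_eq {m N : ℕ} (hm : 0 < m) {lam : F} {h : F[X]}
    (hh : (X ^ m - Polynomial.C lam) * h = X ^ N - Polynomial.C 1) (c : F[X]) (k : ℕ) :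
    (X ^ (N * k) * c) %ₘ (X ^ m - Polynomial.C lam) = c %ₘ (X ^ m - Polynomial.C lam) := by
  apply modByMonic_eq_of_dvd_sub (monic_X_pow_sub_C lam hm.ne')
  have h1 : (X ^ N - 1 : F[X]) ∣ (X ^ N) ^ k - 1 ^ k := sub_dvd_pow_sub_pow _ _ _
  rw [map_one] at hh
  rw [one_pow, ← hh, ← pow_mul] at h1
  have h2 := ((dvd_mul_right _ _).trans h1).mul_right c
  convert h2 using 1
  ring

/-- `blockPair` against `c` is a single coefficient in `F[x]/(x^N - 1)`, namely the constant
coefficient of `x^m g(1/x) · h · c`. -/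
lemma blockPair_eq_coeff {m N : ℕ} (hm : 0 < m) (hN : 0 < N) {μ lam : F} (hμ : μ * lam = 1)
    {h : F[X]} (hh : (X ^ m - Polynomial.C lam) * h = X ^ N - Polynomial.C 1) (g c : F[X])
    (hg : g.natDegree ≤ m) :
    blockPair m μ lam g c = ((reflect m g * h * c) %ₘ (X ^ N - Polynomial.C 1)).coeff 0 := by
  refine Polynomial.induction_with_natDegree_le
    (fun g => blockPair m μ lam g c =
      ((reflect m g * h * c) %ₘ (X ^ N - Polynomial.C 1)).coeff 0) m ?_ ?_ ?_ g hg
  · simp [blockPair]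
  · intro n a _ hn
    -- `⟨x^n, c⟩ = ⟨x^n, x^(Nn) c⟩ = ⟨1, x^((N-1)n) c⟩`
    have e1 : blockPair m μ lam (X ^ n) c = blockPair m μ lam (X ^ n * 1)
        (X ^ n * (X ^ ((N - 1) * n) * c)) := by
      unfold blockPair
      have : n + (N - 1) * n = N * n := by
        obtain ⟨N, rfl⟩ : ∃ k, N = k + 1 := ⟨N - 1, by omega⟩
        simp only [Nat.add_sub_cancel, Nat.add_mul]
        omega
      rw [← mul_assoc, ← pow_add, mul_one, this, X_pow_mul_modByMonic_eq hm hh]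
    rw [blockPair_C_mul_left, e1, blockPair_X_pow_mul hm hμ, ← pow_zero (X : F[X]),
      blockPair_X_pow_left hm, ← coeff_zero_embed hm hN hh, reflect_C_mul_X_pow, revAt_le hn,
      mul_assoc, mul_assoc, mul_assoc, ← smul_eq_C_mul, smul_modByMonic, coeff_smul, smul_eq_mul]
    congr 2
    have e2 : X ^ m * (h * (X ^ ((N - 1) * n) * c)) = X ^ (N * n) * (X ^ (m - n) * (h * c)) := by
      have : X ^ m * X ^ ((N - 1) * n) = (X ^ (N * n) * X ^ (m - n) : F[X]) := by
        rw [← pow_add, ← pow_add]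
        congr 1
        obtain ⟨N, rfl⟩ : ∃ k, N = k + 1 := ⟨N - 1, by omega⟩
        simp only [Nat.add_sub_cancel, Nat.add_mul]
        omega
      linear_combination (h * c) * this
    rw [e2, X_pow_mul_modByMonic_eq hN (h := 1) (mul_one _)]
  · intro f g _ _ hf hg
    rw [blockPair_add_left, hf, hg, reflect_add, add_mul, add_mul, add_modByMonic, coeff_add]

/-- The constant coefficients of all `x^(-k) P` (written `x^((N-1)k) P`) detect whether
`P` vanishes in `F[x]/(x^N - 1)`. -/
lemma dvd_iff_coeff_zero {N : ℕ} (hN : 0 < N) (P : F[X]) :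
    X ^ N - Polynomial.C 1 ∣ P ↔
      ∀ k, ((X ^ ((N - 1) * k) * P) %ₘ (X ^ N - Polynomial.C 1)).coeff 0 = 0 := by
  have hmonN := monic_X_pow_sub_C (1 : F) hN.ne'
  constructor
  · intro h k
    rw [(modByMonic_eq_zero_iff_dvd hmonN).2 (h.mul_left _), coeff_zero]
  · intro h
    rw [← modByMonic_eq_zero_iff_dvd hmonN]
    ext k
    rw [coeff_zero]
    by_cases hk : k < N
    · have e1 : X ^ k * (X ^ ((N - 1) * k) * P) = X ^ (N * k) * P := by
        rw [← mul_assoc, ← pow_add]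
        congr 2
        obtain ⟨N, rfl⟩ : ∃ k, N = k + 1 := ⟨N - 1, by omega⟩
        simp only [Nat.add_sub_cancel, Nat.add_mul]
        omega
      rw [← X_pow_mul_modByMonic_eq hN (h := 1) (mul_one _) P k, ← e1,
        ← blockPair_X_pow_left hk (1 : F)]
      have := blockPair_X_pow_mul hN (mul_one (1 : F)) 1 (X ^ ((N - 1) * k) * P) k
      rw [mul_one] at this
      rw [this, ← pow_zero (X : F[X]), blockPair_X_pow_left hN, h]
    · exact coeff_modByMonic_of_le hN _ _ (by omega)

end Block

/-! ### Ranks modulo the irreducible factors -/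

section Rank

variable {F : Type*} [Field F]

/-- Two quotients of the same space, one refining the other, have equal dimension iff their
kernels agree. -/
lemma ker_le_iff_finrank_eq {V C W : Type*} [AddCommGroup V] [AddCommGroup C] [AddCommGroup W]
    [Module F V] [Module F C] [Module F W] [FiniteDimensional F C] [FiniteDimensional F W]
    (Θ : V →ₗ[F] C) (T : V →ₗ[F] W) (hΘ : Function.Surjective Θ) (hT : Function.Surjective T)
    (hle : LinearMap.ker Θ ≤ LinearMap.ker T) :
    LinearMap.ker T ≤ LinearMap.ker Θ ↔ Module.finrank F W = Module.finrank F C := by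
  constructor
  · intro h
    have e : LinearMap.ker T = LinearMap.ker Θ := le_antisymm h hle
    exact (((T.quotKerEquivOfSurjective hT).symm.trans (Submodule.quotEquivOfEq _ _ e)).trans
      (Θ.quotKerEquivOfSurjective hΘ)).finrank_eq
  · intro h
    let g : C →ₗ[F] W := ((LinearMap.ker Θ).liftQ T hle) ∘ₗ
      (Θ.quotKerEquivOfSurjective hΘ).symm.toLinearMap
    have hg : ∀ v, g (Θ v) = T v := by
      intro v
      have : (Θ.quotKerEquivOfSurjective hΘ).symm (Θ v) = Submodule.Quotient.mk v := by
        rw [LinearEquiv.symm_apply_eq]; rfl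
      simp only [g, LinearMap.comp_apply, LinearEquiv.coe_coe, this]
      simp
    have hs : Function.Surjective g := fun w => by
      obtain ⟨v, rfl⟩ := hT w
      exact ⟨Θ v, hg v⟩
    have hi := (LinearMap.injective_iff_surjective_of_finrank_eq_finrank h.symm).2 hs
    intro v hv
    rw [LinearMap.mem_ker] at hv ⊢
    apply hi
    rw [hg, hv, map_zero]

/-- By the Chinese remainder theorem, `Σ rank (M mod fⱼ) · deg fⱼ` is the `F`-dimension of the
image of `M` on vectors over `F[x]/(∏ fⱼ)`; here it is compared with the dimension of `C`. -/
lemma sum_rank_eq_iff {ℓ s : ℕ} (M : Matrix (Fin ℓ) (Fin ℓ) F[X]) (pf : Fin s → F[X])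
    (hirr : ∀ j, Irreducible (pf j)) (hcop : Pairwise (Function.onFun IsCoprime pf))
    {C : Type*} [AddCommGroup C] [Module F C] [FiniteDimensional F C]
    (Θ : (Fin ℓ → F[X]) →ₗ[F] C) (hΘ : Function.Surjective Θ)
    (hle : ∀ u, Θ u = 0 → ∀ a, ∏ j, pf j ∣ (M *ᵥ u) a) :
    (∑ j, (M.map (Ideal.Quotient.mk (Ideal.span {pf j}))).rank * (pf j).natDegree
        = Module.finrank F C) ↔
      ∀ u, (∀ a, ∏ j, pf j ∣ (M *ᵥ u) a) → Θ u = 0 := by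
  classical
  let K := fun j => F[X] ⧸ Ideal.span {pf j}
  have hmax : ∀ j, (Ideal.span {pf j}).IsMaximal := fun j =>
    PrincipalIdealRing.isMaximal_of_irreducible (hirr j)
  let N := fun j => M.map (Ideal.Quotient.mk (Ideal.span {pf j}))
  let R := fun j => LinearMap.range (N j).mulVecLin
  have hfinK : ∀ j, Module.Finite F (K j) := fun j => by
    have := (hirr j).ne_zero
    exact (AdjoinRoot.powerBasis this).finite
  have hfinR : ∀ j, Module.Finite F (R j) := fun j => by
    have : Module.Finite F (Fin ℓ → K j) := inferInstance
    exact Module.Finite.of_injective ((R j).subtype.restrictScalars F) (R j).injective_subtype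
  have hfreeR : ∀ j, Module.Free F (R j) := fun j => Module.Free.of_divisionRing F (R j)
  have hrank : ∀ j, (N j).rank * (pf j).natDegree = Module.finrank F (R j) := by
    intro j
    let : Field (K j) := Ideal.Quotient.field _
    rw [← Module.finrank_mul_finrank F (K j) (R j), mul_comm]
    congr 1
    exact finrank_quotient_span_eq_natDegree.symm
  let red : ∀ j, (Fin ℓ → F[X]) →ₗ[F] (Fin ℓ → K j) := fun j =>
    LinearMap.pi fun a => (Ideal.Quotient.mkₐ F (Ideal.span {pf j})).toLinearMap ∘ₗ
      LinearMap.proj a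
  let T : (Fin ℓ → F[X]) →ₗ[F] (∀ j, R j) := LinearMap.pi fun j =>
    (((N j).mulVecLin.rangeRestrict).restrictScalars F) ∘ₗ red j
  have hTval : ∀ u j, ((T u j : R j) : Fin ℓ → K j) =
      fun a => Ideal.Quotient.mk (Ideal.span {pf j}) ((M *ᵥ u) a) := by
    intro u j
    ext a
    simp [T, red, N, Matrix.mulVec, dotProduct, map_sum]
  have hTker : ∀ u, T u = 0 ↔ ∀ a, ∏ j, pf j ∣ (M *ᵥ u) a := by
    intro u
    have h1 : T u = 0 ↔ ∀ j a, pf j ∣ (M *ᵥ u) a := by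
      simp only [← Ideal.mem_span_singleton, ← Ideal.Quotient.eq_zero_iff_mem]
      constructor
      · intro h j a
        have := congrFun (hTval u j) a
        rw [h] at this
        exact this.symm
      · intro h
        funext j
        apply Subtype.ext
        rw [hTval]
        funext a
        exact h j a
    rw [h1]
    constructor
    · intro h a
      exact Finset.prod_dvd_of_coprime (fun i _ j _ hij => hcop hij) fun j _ => h j a
    · intro h j a
      exact (Finset.dvd_prod_of_mem pf (Finset.mem_univ j)).trans (h a)
  have hTs : Function.Surjective T := by
    intro w
    choose x hx using fun j => (w j).2
    have hI : Pairwise (Function.onFun IsCoprime fun j => Ideal.span {pf j}) := fun i j hij =>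
      (Ideal.isCoprime_span_singleton_iff _ _).2 (hcop hij)
    choose u hu using fun a : Fin ℓ => Ideal.pi_quotient_surjective hI (fun j => x j a)
    refine ⟨u, ?_⟩
    funext j
    apply Subtype.ext
    rw [← hx j]
    have : red j u = x j := by
      funext a
      exact hu a j
    rw [← this]
    rfl
  have := ker_le_iff_finrank_eq (W := ∀ j, R j) Θ T hΘ hTs fun u hu => by
    rw [LinearMap.mem_ker] at hu ⊢
    exact (hTker u).2 (hle u hu)
  rw [Module.finrank_pi_fintype] at this
  rw [Finset.sum_congr rfl fun j _ => hrank j, ← this]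
  constructor
  · intro h u hu
    exact h ((hTker u).2 hu)
  · intro h u hu
    exact h u ((hTker u).1 hu)

end Rank

/-! ### Codewords and the Galois dual -/

section Code

variable {F : Type*} [Field F] {ℓ : ℕ} {m : Fin ℓ → ℕ} {lam : Fin ℓ → F}

lemma toCode_add (q q' : Fin ℓ → F[X]) :
    toCode lam m (q + q') = toCode lam m q + toCode lam m q' := by
  funext i j
  simp [toCode, add_modByMonic]

lemma toCode_smul (a : F) (q : Fin ℓ → F[X]) :
    toCode lam m (a • q) = a • toCode lam m q := by
  funext i j
  simp [toCode, smul_modByMonic]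

lemma toCode_surjective (hm : ∀ i, 0 < m i) : Function.Surjective (toCode lam m) := by
  intro v
  refine ⟨fun i => ∑ j : Fin (m i), Polynomial.C (v i j) * X ^ (j : ℕ), ?_⟩
  funext i j
  have hd : (∑ j : Fin (m i), Polynomial.C (v i j) * X ^ (j : ℕ)).degree < (m i : WithBot ℕ) := by
    refine degree_sum_fin_lt _
  unfold toCode
  rw [(modByMonic_eq_self_iff (monic_X_pow_sub_C _ (hm i).ne')).2
    (by rwa [degree_X_pow_sub_C (hm i)]), finsetSum_coeff, Finset.sum_eq_single j]
  · simp
  · intro b _ hb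
    have : (j : ℕ) ≠ b := fun h => hb (Fin.ext h.symm)
    simp [coeff_X_pow, this]
  · simp

/-- Applying `σ^(e-κ)` to the `κ`-Galois form turns it into a sum of bilinear block pairings. -/
lemma galois_form_eq_zero_iff {p e : ℕ} [Fact p.Prime] [Fintype F] [CharP F p]
    (hcard : Fintype.card F = p ^ e) {κ : ℕ} (hκ : κ < e) (hm : ∀ i, 0 < m i)
    (hσΛ : ∀ i, ((lam i)⁻¹) ^ p ^ (e - κ) = lam i) (q c : Fin ℓ → F[X]) :
    ∑ i, ∑ j, toCode lam m q i j * (toCode lam m c i j) ^ p ^ κ = 0 ↔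
      ∑ i, blockPair (m i) (lam i)⁻¹ (lam i) ((q i).map (powFrob F p (e - κ))) (c i) = 0 := by
  rw [← map_eq_zero (powFrob F p (e - κ)), map_sum]
  have key : ∀ i, powFrob F p (e - κ) (∑ j, toCode lam m q i j * (toCode lam m c i j) ^ p ^ κ) =
      blockPair (m i) (lam i)⁻¹ (lam i) ((q i).map (powFrob F p (e - κ))) (c i) := by
    intro i
    rw [map_sum]
    refine Finset.sum_congr rfl fun j _ => ?_
    have h1 : ∀ a : F, powFrob F p (e - κ) (a ^ p ^ κ) = a := by
      intro a
      change (a ^ p ^ κ) ^ p ^ (e - κ) = a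
      rw [← pow_mul, ← pow_add, Nat.add_sub_cancel' hκ.le, ← hcard, FiniteField.pow_card]
    have h2 : powFrob F p (e - κ) (lam i) = (lam i)⁻¹ := by
      have := hσΛ i
      rw [inv_pow] at this
      rw [← this, inv_inv]
      simp only [this]
      rfl
    rw [map_mul, h1]
    unfold toCode
    congr 1
    rw [← coeff_map, map_modByMonic _ (monic_X_pow_sub_C _ (hm i).ne'), Polynomial.map_sub,
      Polynomial.map_pow, map_X, map_C, h2]
  rw [Finset.sum_congr rfl fun i _ => key i]

end Code

section Main

variable {p e : ℕ} [Fact p.Prime] {F : Type*} [Field F] [Fintype F] [CharP F p]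

/-- A codeword `c` is in the `κ`-Galois dual iff every component of `S · H · c` vanishes modulo
`x^N - 1`, where the rows of `S` are the `σ^(e-κ)(x^m g(1/x))`. -/
lemma mem_dual_iff (hcard : Fintype.card F = p ^ e) {κ : ℕ} (hκ : κ < e)
    {ℓ : ℕ} {m : Fin ℓ → ℕ} (hm : ∀ i, 0 < m i)
    {lam : Fin ℓ → F} (hlam : ∀ i, lam i ≠ 0)
    (hσΛ : ∀ i, ((lam i)⁻¹) ^ p ^ (e - κ) = lam i)
    (CC : Submodule F (∀ i, Fin (m i) → F))
    (G : Matrix (Fin ℓ) (Fin ℓ) F[X]) (hG : IsGPM lam m CC G)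
    (hdeg : ∀ i j, (G i j).natDegree ≤ m j) {N : ℕ} (hN : 0 < N) (h : Fin ℓ → F[X])
    (hh : ∀ i, (X ^ m i - Polynomial.C (lam i)) * h i = X ^ N - Polynomial.C 1)
    (c : Fin ℓ → F[X]) :
    toCode lam m c ∈ galoisDualMT p κ CC ↔
      ∀ a, X ^ N - Polynomial.C 1 ∣
        ∑ b, Polynomial.map (powFrob F p (e - κ)) (reflect (m b) (G a b)) * h b * c b := by
  set τ := powFrob F p (e - κ) with hτ
  -- `L q` is the pairing of `σ^(e-κ)(q)` with `c`.
  let L : (Fin ℓ → F[X]) → F := fun q =>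
    ∑ i, blockPair (m i) (lam i)⁻¹ (lam i) ((q i).map τ) (c i)
  have hLadd : ∀ q q', L (q + q') = L q + L q' := by
    intro q q'
    simp [L, blockPair_add_left, Finset.sum_add_distrib]
  have hLsmul : ∀ (a : F) q, L (Polynomial.C a • q) = τ a * L q := by
    intro a q
    simp [L, blockPair_C_mul_left, Finset.mul_sum]
  have hmem : ∀ q, q ∈ Submodule.span F[X] (Set.range fun i => G i) ↔ toCode lam m q ∈ CC :=
    fun q => Set.ext_iff.1 hG.2 q
  have h1 : toCode lam m c ∈ galoisDualMT p κ CC ↔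
      ∀ q ∈ Submodule.span F[X] (Set.range fun i => G i), L q = 0 := by
    constructor
    · intro hc q hq
      exact (galois_form_eq_zero_iff hcard hκ hm hσΛ q c).1 (hc _ ((hmem q).1 hq))
    · intro hL w hw
      obtain ⟨q, rfl⟩ := toCode_surjective (lam := lam) hm w
      exact (galois_form_eq_zero_iff hcard hκ hm hσΛ q c).2 (hL q ((hmem q).2 hw))
  have h2 : (∀ q ∈ Submodule.span F[X] (Set.range fun i => G i), L q = 0) ↔
      ∀ a k, L ((X ^ k : F[X]) • G a) = 0 := by
    constructor
    · intro hL a k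
      exact hL _ (Submodule.smul_mem _ _ (Submodule.subset_span ⟨a, rfl⟩))
    · intro hL q hq
      have hL0 : L 0 = 0 := by simpa using hLadd 0 0
      have hf : ∀ (f : F[X]) a, L (f • G a) = 0 := by
        intro f a
        induction f using Polynomial.induction_on' with
        | add f g hf hg => rw [add_smul, hLadd, hf, hg, add_zero]
        | monomial k r => rw [← C_mul_X_pow_eq_monomial, mul_smul, hLsmul, hL, mul_zero]
      obtain ⟨u, rfl⟩ := (Submodule.mem_span_range_iff_exists_fun _).1 hq
      let L' : (Fin ℓ → F[X]) →+ F := ⟨⟨L, hL0⟩, hLadd⟩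
      change L' _ = 0
      rw [map_sum]
      exact Finset.sum_eq_zero fun a _ => hf _ _
  rw [h1, h2]
  refine forall_congr' fun a => ?_
  rw [dvd_iff_coeff_zero hN]
  refine forall_congr' fun k => ?_
  -- Moving `x^k` across the pairing turns it into `x^(-k) = x^((N-1)k)`.
  have h3 : ∀ b, blockPair (m b) (lam b)⁻¹ (lam b) ((X ^ k * G a b).map τ) (c b) =
      ((X ^ ((N - 1) * k) * (Polynomial.map τ (reflect (m b) (G a b)) * h b * c b)) %ₘ
        (X ^ N - Polynomial.C 1)).coeff 0 := by
    intro b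
    have hμ : (lam b)⁻¹ * lam b = 1 := inv_mul_cancel₀ (hlam b)
    have e1 : blockPair (m b) (lam b)⁻¹ (lam b) ((X ^ k * G a b).map τ) (c b) =
        blockPair (m b) (lam b)⁻¹ (lam b) (X ^ k * (G a b).map τ)
          (X ^ k * (X ^ ((N - 1) * k) * c b)) := by
      have : k + (N - 1) * k = N * k := by
        obtain ⟨N, rfl⟩ : ∃ k, N = k + 1 := ⟨N - 1, by omega⟩
        simp only [Nat.add_sub_cancel, Nat.add_mul]
        omega
      unfold blockPair
      rw [← mul_assoc, ← pow_add, this, X_pow_mul_modByMonic_eq (hm b) (hh b), Polynomial.map_mul,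
        Polynomial.map_pow, map_X]
    rw [e1, blockPair_X_pow_mul (hm b) hμ, blockPair_eq_coeff (hm b) hN hμ (hh b) _ _
      (natDegree_map_le.trans (hdeg a b)), reflect_map]
    congr 2
    ring
  have h4 : L ((X ^ k : F[X]) • G a) =
      ((X ^ ((N - 1) * k) * ∑ b, Polynomial.map τ (reflect (m b) (G a b)) * h b * c b) %ₘ
        (X ^ N - Polynomial.C 1)).coeff 0 := by
    have : L ((X ^ k : F[X]) • G a) =
        ∑ b, blockPair (m b) (lam b)⁻¹ (lam b) ((X ^ k * G a b).map τ) (c b) := rfl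
    rw [this, Finset.sum_congr rfl fun b _ => h3 b, Finset.mul_sum, ← finsetSum_coeff]
    congr 1
    exact (map_sum (modByMonicHom (X ^ N - Polynomial.C (1 : F))) _ _).symm
  rw [h4]

end Main

/-- Let `q = p^e`, `0 ≤ κ < e`, and let `C` be a Λ-MT code with GPM `G`,
`σ^{e-κ}(Λ⁻¹) = Λ`, each `mᵢ` coprime to `q`, entries of column `j` of `G` of degree at
most `mⱼ`.  With `N = lcm(tᵢ mᵢ)` factor `x^N-1 = ∏ⱼ pⱼ(x)` into (distinct) irreducible
polynomials, and let `rⱼ` be the rank over `F_q[x]/⟨pⱼ⟩` of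
`σ^{e-κ}(G(1/x)·diag(x^{mᵢ}))·diag((x^N-1)/(x^{mᵢ}-λᵢ))·Gᵀ` reduced mod `pⱼ`.  Then `C`
is κ-Galois LCD iff `∑ⱼ rⱼ·deg pⱼ = dim C`. -/
theorem stmt18 {p e : ℕ} [Fact p.Prime] {F : Type*} [Field F] [Fintype F] [CharP F p]
    (hcard : Fintype.card F = p ^ e) {κ : ℕ} (hκ : κ < e)
    {ℓ : ℕ} {m : Fin ℓ → ℕ} (hm : ∀ i, 0 < m i)
    {lam : Fin ℓ → F} (hlam : ∀ i, lam i ≠ 0)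
    (hσΛ : ∀ i, ((lam i)⁻¹) ^ p ^ (e - κ) = lam i)
    (CC : Submodule F (∀ i, Fin (m i) → F)) (hC : IsMT lam CC)
    (G : Matrix (Fin ℓ) (Fin ℓ) (Polynomial F)) (hG : IsGPM lam m CC G)
    (hcop : ∀ i, Nat.Coprime (m i) (Fintype.card F))
    (hdeg : ∀ i j, (G i j).natDegree ≤ m j)
    {N : ℕ} (hN : N = Finset.univ.lcm (fun i => orderOf (lam i) * m i))
    {s : ℕ} (pf : Fin s → Polynomial F) (hirr : ∀ j, Irreducible (pf j))
    (hprod : ∏ j, pf j = X ^ N - 1) :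
    CC ⊓ galoisDualMT p κ CC = ⊥ ↔
      ∑ j, (((Matrix.of fun a b =>
            Polynomial.map (powFrob F p (e - κ)) (Polynomial.reflect (m b) (G a b))) *
          Matrix.diagonal (fun i => (X ^ N - 1) / (X ^ (m i) - Polynomial.C (lam i))) *
          G.transpose).map (Ideal.Quotient.mk (Ideal.span {pf j}))).rank *
          (pf j).natDegree
        = Module.finrank F CC := by
  have hNdvd : ∀ i, orderOf (lam i) * m i ∣ N := fun i =>
    hN ▸ Finset.dvd_lcm (Finset.mem_univ i)
  have hNcast : (N : F) ≠ 0 := by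
    rw [Ne, CharP.cast_eq_zero_iff F p, hN]
    intro hdvd
    have hp : p.Prime := Fact.out
    have hdvd' : p ∣ ∏ i, orderOf (lam i) * m i :=
      hdvd.trans (Finset.lcm_dvd fun i _ => Finset.dvd_prod_of_mem _ (Finset.mem_univ i))
    obtain ⟨i, _, hi⟩ := (hp.prime.dvd_finsetProd_iff _).1 hdvd'
    have hpe : p ∣ Fintype.card F := hcard ▸ dvd_pow_self p (by omega)
    rcases hp.dvd_mul.1 hi with hi | hi
    · have h1 : orderOf (lam i) ∣ Fintype.card F - 1 :=
        orderOf_dvd_of_pow_eq_one (FiniteField.pow_card_sub_one_eq_one _ (hlam i))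
      have h2 : p ∣ 1 := by
        have := (Nat.dvd_sub hpe (hi.trans h1))
        rwa [Nat.sub_sub_self Fintype.card_pos] at this
      exact hp.one_lt.ne' (Nat.dvd_one.1 h2)
    · exact hp.one_lt.ne' (Nat.dvd_one.1 (hcop i ▸ Nat.dvd_gcd hi hpe))
  have hN0 : 0 < N := Nat.pos_of_ne_zero fun h => hNcast (by simp [h])
  have hh : ∀ i, (X ^ m i - Polynomial.C (lam i)) *
      ((X ^ N - 1) / (X ^ m i - Polynomial.C (lam i))) = X ^ N - Polynomial.C 1 := by
    intro i
    rw [map_one]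
    apply EuclideanDomain.mul_div_cancel'
    · exact (monic_X_pow_sub_C _ (hm i).ne').ne_zero
    · obtain ⟨k, hk⟩ := hNdvd i
      have h1 := sub_dvd_pow_sub_pow (X ^ m i : F[X]) (Polynomial.C (lam i)) (orderOf (lam i) * k)
      rw [← pow_mul, ← map_pow, pow_mul (lam i), pow_orderOf_eq_one, one_pow, map_one] at h1
      rwa [hk, show orderOf (lam i) * m i * k = m i * (orderOf (lam i) * k) by ring]
  have hcopf : Pairwise (Function.onFun IsCoprime pf) := by
    intro i j hij
    have hsep : (X ^ N - 1 : F[X]).Separable := X_pow_sub_one_separable_iff.2 hNcast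
    have hd : pf i * pf j ∣ X ^ N - 1 := by
      rw [← hprod, ← Finset.prod_pair hij]
      exact Finset.prod_dvd_prod_of_subset _ _ _ (Finset.subset_univ _)
    exact (hsep.of_dvd hd).isCoprime
  -- `u ↦ toCode (u G)` maps `F[x]^ℓ` onto the code.
  have hmem : ∀ u : Fin ℓ → F[X], toCode lam m (Gᵀ *ᵥ u) ∈ CC := by
    intro u
    have : Gᵀ *ᵥ u ∈ Submodule.span F[X] (Set.range fun i => G i) := by
      rw [Submodule.mem_span_range_iff_exists_fun]
      refine ⟨u, ?_⟩
      funext b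
      simp [Matrix.mulVec, dotProduct, mul_comm]
    exact (Set.ext_iff.1 hG.2 _).1 this
  let Θ : (Fin ℓ → F[X]) →ₗ[F] CC :=
    { toFun := fun u => ⟨toCode lam m (Gᵀ *ᵥ u), hmem u⟩
      map_add' := fun u v => Subtype.ext (by simp [Matrix.mulVec_add, toCode_add])
      map_smul' := fun a u => Subtype.ext (by simp [Matrix.mulVec_smul, toCode_smul]) }
  have hΘ : Function.Surjective Θ := by
    rintro ⟨w, hw⟩
    obtain ⟨q, rfl⟩ := toCode_surjective (lam := lam) hm w
    obtain ⟨u, hu⟩ := (Submodule.mem_span_range_iff_exists_fun _).1 ((Set.ext_iff.1 hG.2 q).2 hw)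
    refine ⟨u, Subtype.ext ?_⟩
    change toCode lam m (Gᵀ *ᵥ u) = toCode lam m q
    rw [← hu]
    congr 1
    funext b
    simp [Matrix.mulVec, dotProduct, mul_comm]
  have hdual : ∀ u, (Θ u : ∀ i, Fin (m i) → F) ∈ galoisDualMT p κ CC ↔
      ∀ a, ∏ j, pf j ∣ (((Matrix.of fun a b =>
            Polynomial.map (powFrob F p (e - κ)) (Polynomial.reflect (m b) (G a b))) *
          Matrix.diagonal (fun i => (X ^ N - 1) / (X ^ (m i) - Polynomial.C (lam i))) *
          G.transpose) *ᵥ u) a := by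
    intro u
    have h1 := mem_dual_iff hcard hκ hm hlam hσΛ CC G hG hdeg hN0 _ hh (Gᵀ *ᵥ u)
    rw [hprod, ← map_one Polynomial.C]
    refine h1.trans (forall_congr' fun a => ?_)
    rw [← Matrix.mulVec_mulVec, Matrix.mulVec, dotProduct]
    simp only [Matrix.mul_diagonal, Matrix.of_apply, map_one]
  rw [sum_rank_eq_iff _ pf hirr hcopf Θ hΘ fun u hu => (hdual u).1 (by rw [hu]; exact zero_mem _)]
  simp only [← hdual]
  rw [Submodule.eq_bot_iff]
  constructor
  · intro h u hu
    exact Subtype.ext (h _ ⟨(Θ u).2, hu⟩)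
  · rintro h w ⟨hw, hw'⟩
    obtain ⟨u, hu⟩ := hΘ ⟨w, hw⟩
    have := h u (by rw [hu]; exact hw')
    rw [hu] at this
    exact congrArg Subtype.val this
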